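/- Let k be a field and let q : C ⟶ V be a morphism of chain complexes of k-vector spaces which is a quasi-isomorphism and is surjective in every degree. Then q admits a section: there exists a chain map r : V ⟶ C with q ∘ r = id_V. -/

import Mathlib

/-!
The kernel `K` of `q` is acyclic. Choose maps `s` with `d s d = d`; the null-homotopic endomorphism
`φ = d s + s d` of `K` is the identity on boundaries, so `1 - φ` kills boundaries and takes values
in cycles. As `K` is acyclic, `(1 - φ)² = 0`, whence `1 = φ (2 - φ)` is null-homotopic too. If `h`
contracts `K` and `p` is a degreewise retraction of `K ⟶ C`, then `d (h p) + (h p) d` is a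
retraction which is a chain map, and its kernel is the image of a section of `q`.
-/

open CategoryTheory

universe v u w

section Preadditive

variable {𝓐 : Type u} [Category.{v} 𝓐] [Preadditive 𝓐] {ι : Type w} {c : ComplexShape ι}
  {K L M : HomologicalComplex 𝓐 c}

theorem d_comp_nullHomotopicMap (hom : ∀ i j, K.X i ⟶ L.X j) {i j : ι} (hij : c.Rel i j) :
    K.d i j ≫ (Homotopy.nullHomotopicMap hom).f j = K.d i j ≫ hom j i ≫ L.d i j := by
  change K.d i j ≫ (K.d j _ ≫ _ + prevD j hom) = _
  rw [prevD_eq hom hij, Preadditive.comp_add, K.d_comp_d_assoc, Limits.zero_comp, zero_add]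

theorem isSplitMono_of_homotopy_id_zero (f : K ⟶ L) (h : Homotopy (𝟙 K) 0)
    (hf : ∀ i, IsSplitMono (f.f i)) : IsSplitMono f := by
  have retraction_comp (i j : ι) : f.f i ≫ retraction (f.f i) ≫ h.hom i j = h.hom i j :=
    IsSplitMono.id_assoc _ _
  refine .mk' ⟨Homotopy.nullHomotopicMap fun i j ↦ retraction (f.f i) ≫ h.hom i j, ?_⟩
  rw [Homotopy.comp_nullHomotopicMap]
  simp only [retraction_comp]
  ext i
  exact ((h.comm i).trans (add_zero _)).symm

/-- A split complex in the sense of Weibel, *An introduction to homological algebra*, 1.4.1: every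
differential `d` factors as `d s d`. The maps `s` are not part of the data. -/
def IsSplitComplex (K : HomologicalComplex 𝓐 c) : Prop :=
  ∀ i j, ∃ s : K.X j ⟶ K.X i, K.d i j ≫ s ≫ K.d i j = K.d i j

theorem IsSplitComplex.exists_homotopy_zero_d_comp_eq (hK : IsSplitComplex K) :
    ∃ φ : K ⟶ K, Nonempty (Homotopy φ 0) ∧ ∀ i j, K.d i j ≫ φ.f j = K.d i j := by
  classical
  choose s hs using hK
  let t (i j : ι) : K.X i ⟶ K.X j := if c.Rel j i then s j i else 0
  refine ⟨Homotopy.nullHomotopicMap t, ⟨Homotopy.nullHomotopy t fun i j h ↦ if_neg h⟩, ?_⟩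
  intro i j
  by_cases hij : c.Rel i j
  · simpa only [d_comp_nullHomotopicMap t hij, t, if_pos hij] using hs i j
  · rw [K.shape i j hij, Limits.zero_comp]

theorem comp_eq_zero_of_acyclic (hL : L.Acyclic) (f : K ⟶ L) (g : L ⟶ M)
    (hf : ∀ i j, f.f i ≫ L.d i j = 0) (hg : ∀ i j, L.d i j ≫ g.f j = 0) : f ≫ g = 0 := by
  ext i
  exact (hL i).comp_eq_zero (hf i _) (hg _ i)

theorem IsSplitComplex.nonempty_homotopy_id_zero (hK : IsSplitComplex K) (hK' : K.Acyclic) :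
    Nonempty (Homotopy (𝟙 K) 0) := by
  obtain ⟨φ, ⟨h⟩, hφ⟩ := hK.exists_homotopy_zero_d_comp_eq
  have sq_eq_zero : (𝟙 K - φ) ≫ (𝟙 K - φ) = 0 :=
    comp_eq_zero_of_acyclic hK' _ _ (fun i j ↦ by simp [hφ]) (fun i j ↦ by simp [hφ])
  have id_eq : 𝟙 K = φ ≫ (𝟙 K + (𝟙 K - φ)) := by
    rw [← sub_eq_zero, ← sq_eq_zero]
    simp only [Preadditive.comp_add, Preadditive.comp_sub, Preadditive.sub_comp, Category.comp_id,
      Category.id_comp]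
    abel
  exact ⟨(Homotopy.ofEq id_eq).trans ((h.compRight _).trans (.ofEq Limits.zero_comp))⟩

end Preadditive

section Abelian

variable {𝓐 : Type u} [Category.{v} 𝓐] [Abelian 𝓐] {ι : Type w} {c : ComplexShape ι}

theorem exists_comp_comp_eq_self {X Y : 𝓐} (f : X ⟶ Y) [Projective Y]
    [Projective (Limits.cokernel f)] : ∃ g : Y ⟶ X, f ≫ g ≫ f = f := by
  let t := Projective.factorThru (𝟙 _) (Limits.cokernel.π f)
  obtain ⟨g, hg⟩ : ∃ g : Y ⟶ X, g ≫ f = 𝟙 Y - Limits.cokernel.π f ≫ t :=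
    ⟨_, (ShortComplex.exact_cokernel f).liftFromProjective_comp _ (by simp [t])⟩
  exact ⟨g, by simp [hg]⟩

theorem isSplitComplex_of_projective [∀ X : 𝓐, Projective X] (K : HomologicalComplex 𝓐 c) :
    IsSplitComplex K :=
  fun i j ↦ exists_comp_comp_eq_self (K.d i j)

theorem section_of_quasiIso_of_surjective_general [∀ X : 𝓐, Projective X]
    {C V : HomologicalComplex 𝓐 c} (q : C ⟶ V) (hq : QuasiIso q) (hepi : ∀ i, Epi (q.f i)) :
    ∃ r : V ⟶ C, r ≫ q = 𝟙 V := by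
  have : Epi q := HomologicalComplex.epi_of_epi_f q hepi
  let S := ShortComplex.mk (Limits.kernel.ι q) q (Limits.kernel.condition q)
  have hS : S.ShortExact := { exact := ShortComplex.exact_kernel q }
  obtain ⟨h⟩ := (isSplitComplex_of_projective S.X₁).nonempty_homotopy_id_zero (hS.acyclic_X₁ hq)
  have hf (i : ι) : IsSplitMono (S.f.f i) :=
    (hS.map_of_exact (HomologicalComplex.eval 𝓐 c i)).splittingOfProjective.isSplitMono_f
  have : IsSplitMono S.f := isSplitMono_of_homotopy_id_zero S.f h hf
  let splitting := ShortComplex.Splitting.ofExactOfRetraction S hS.exact (retraction S.f)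
    (IsSplitMono.id S.f) hS.epi_g
  exact ⟨splitting.s, splitting.s_g⟩

end Abelian

/-- Over a field, any quasi-isomorphism of chain complexes which is surjective in every
degree admits a section. -/
theorem section_of_quasiIso_of_surjective
    {k : Type} [Field k]
    {C V : HomologicalComplex (ModuleCat.{0} k) (ComplexShape.down ℤ)}
    (q : C ⟶ V) (hq : QuasiIso q)
    (hsurj : ∀ i : ℤ, Function.Surjective (q.f i)) :
    ∃ r : V ⟶ C, r ≫ q = 𝟙 V :=
  section_of_quasiIso_of_surjective_general q hq fun i ↦
    (ModuleCat.epi_iff_surjective (q.f i)).2 (hsurj i)
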